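/- Let m be a positive integer and let σ ∈ ℝ satisfy m−1 < σ < m. Let p be a polynomial of degree at most m−1, and let φ : [0,1] → ℝ be continuous on [0,1], twice continuously differentiable on (0,1], with |φ'(s)| ≤ C₀ s^{σ−m} and |φ''(s)| ≤ C₀ s^{σ−m−1} for all 0 < s ≤ 1 and some constant C₀. Define r(x) = p(x) + (1/Γ(σ)) ∫₀ˣ (x-s)^{σ−1} φ(s) ds for 0 ≤ x ≤ 1. Then r is (m+1)-times differentiable on (0,1], with r^{(m+1)}(x) = ( φ(0)/Γ(σ−m) ) x^{σ−m−1} + (1/Γ(σ−m+1)) · (1/x) ∫₀ˣ (x-s)^{σ−m} [ s φ''(s) + (σ−m+1) φ'(s) ] ds, and there exists a constant C, independent of x, such that |r^{(m+1)}(x)| ≤ C x^{σ−m−1} for all 0 < x ≤ 1. -/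

import Mathlib

/-- `r(x) = p(x) + (1/Γ(σ)) ∫₀ˣ (x-s)^{σ−1} φ(s) ds`. -/
noncomputable def rfun (σ : ℝ) (p : Polynomial ℝ) (φ : ℝ → ℝ) : ℝ → ℝ :=
  fun x => p.eval x + (1 / Real.Gamma σ) *
    ∫ s in (0:ℝ)..x, (x - s) ^ (σ - 1) * φ s

/-!
Write `J^a f` for the Riemann–Liouville integral of order `a`, so that `r = p + J^σ φ`. Substituting
`s = x t` gives `J^a f x = x^a / Γ(a) * ∫₀¹ (1-t)^(a-1) f(x t) dt`, an integral in which `x` occurs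
only inside `f`; differentiating under the integral sign yields
`(J^a f)' = x⁻¹ J^a (s f' + a f)`, and this needs `f` only to be `O(s^b)` with `b > -1`. Integrating
by parts turns it into `(J^a f)' = f(0) x^(a-1) / Γ(a) + J^a f'` when `f` is continuous at `0`, and
into `(J^(a+1) f)' = J^a f`.

With `a = σ - m + 1`, the last rule used `m - 1` times reduces `r` to `p^(m-1) + J^a φ`. The second
rule and then the first, applied to `φ'`, give the formula for `r^(m+1)`. The first rule is needed
at the end because `φ''` itself may fail to be integrable at `0`, whereas `s φ''` is `O(s^(σ-m))`.
The growth bound is the scaling `J^a f = O(x^(a+b))` for `f = O(s^b)`.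
-/

open Set Filter Topology MeasureTheory Asymptotics

section DerivWithin

variable {E : Type*} [NormedAddCommGroup E] [NormedSpace ℝ E] {f f' : ℝ → E} {s : Set ℝ}
  {a b x : ℝ} {n : ℕ}

lemma Icc_eventuallyEq_Ioc (hx : a < x) : Icc a b =ᶠ[𝓝 x] Ioc a b := by
  filter_upwards [Ioi_mem_nhds hx] with y hy
  exact propext ⟨fun h => ⟨hy, h.2⟩, fun h => ⟨h.1.le, h.2⟩⟩

lemma iteratedDerivWithin_Icc_eq_Ioc (n : ℕ) (f : ℝ → E) (hx : a < x) :
    iteratedDerivWithin n f (Icc a b) x = iteratedDerivWithin n f (Ioc a b) x := by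
  rw [iteratedDerivWithin, iteratedDerivWithin,
    iteratedFDerivWithin_congr_set (Icc_eventuallyEq_Ioc hx)]

lemma hasDerivWithinAt_derivWithin_Icc (hf : DifferentiableOn ℝ f (Ioc a b)) (hx : x ∈ Ioc a b) :
    HasDerivWithinAt f (derivWithin f (Icc a b) x) (Ioc a b) x := by
  rw [derivWithin_congr_set (Icc_eventuallyEq_Ioc hx.1)]
  exact (hf x hx).hasDerivWithinAt

lemma contDiffOn_derivWithin_Icc
    (hf : ContDiffOn ℝ (n + 1 : ℕ) f (Ioc a b)) :
    ContDiffOn ℝ n (derivWithin f (Icc a b)) (Ioc a b) := by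
  rw [Nat.cast_succ, contDiffOn_succ_iff_derivWithin (uniqueDiffOn_Ioc a b)] at hf
  exact hf.2.2.congr fun x hx => derivWithin_congr_set (Icc_eventuallyEq_Ioc hx.1)

lemma hasDerivWithinAt_Ioc_of_hasDerivAt_Ioo (hf : ContinuousOn f (Ioc a b))
    (hf' : ContinuousOn f' (Ioc a b)) (h : ∀ y ∈ Ioo a b, HasDerivAt f (f' y) y)
    (hx : x ∈ Ioc a b) : HasDerivWithinAt f (f' x) (Ioc a b) x := by
  rcases hx.2.lt_or_eq with hxb | rfl
  · exact (h x ⟨hx.1, hxb⟩).hasDerivWithinAt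
  have hmem : Ioo a x ∈ 𝓝[<] x := Ioo_mem_nhdsLT hx.1
  have hlim : Tendsto f' (𝓝[<] x) (𝓝 (f' x)) := by
    rw [← nhdsWithin_Ioo_eq_nhdsLT hx.1]
    exact (hf' x hx).mono Ioo_subset_Ioc_self
  refine (hasDerivWithinAt_Iic_of_tendsto_deriv (s := Ioo a x) ?_ ?_ hmem ?_).mono fun y hy => hy.2
  · exact fun y hy => (h y hy).differentiableAt.differentiableWithinAt
  · exact (hf x hx).mono Ioo_subset_Ioc_self
  · refine hlim.congr' ?_
    filter_upwards [hmem] with y hy using (h y hy).deriv.symm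

lemma contDiffOn_succ_of_hasDerivWithinAt (hs : UniqueDiffOn ℝ s)
    (h : ∀ x ∈ s, HasDerivWithinAt f (f' x) s x) (hf' : ContDiffOn ℝ n f' s) :
    ContDiffOn ℝ (n + 1 : ℕ) f s := by
  rw [Nat.cast_succ, contDiffOn_succ_iff_derivWithin hs]
  exact ⟨fun x hx => (h x hx).differentiableWithinAt, by simp,
    hf'.congr fun x hx => (h x hx).derivWithin (hs x hx)⟩

lemma iteratedDerivWithin_succ_of_hasDerivWithinAt (hs : UniqueDiffOn ℝ s)
    (h : ∀ x ∈ s, HasDerivWithinAt f (f' x) s x) (hx : x ∈ s) :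
    iteratedDerivWithin (n + 1) f s x = iteratedDerivWithin n f' s x := by
  rw [iteratedDerivWithin_succ']
  exact iteratedDerivWithin_congr (fun y hy => (h y hy).derivWithin (hs y hy)) hx

lemma iteratedDerivWithin_polynomial_eval (p : Polynomial ℝ)
    (hs : UniqueDiffOn ℝ s) (n : ℕ) (hx : x ∈ s) :
    iteratedDerivWithin n (fun y => p.eval y) s x = (Polynomial.derivative^[n] p).eval x := by
  induction n generalizing p with
  | zero => simp
  | succ n ih =>
    rw [iteratedDerivWithin_succ_of_hasDerivWithinAt hs (fun y _ => p.hasDerivWithinAt y s) hx, ih,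
      Function.iterate_succ_apply]

end DerivWithin

lemma isBigO_rpow_Ioc_iff {b R : ℝ} {f : ℝ → ℝ} :
    f =O[𝓟 (Ioc 0 R)] (· ^ b) ↔ ∃ C, ∀ x ∈ Ioc 0 R, |f x| ≤ C * x ^ b := by
  refine isBigO_principal.trans (exists_congr fun C => forall₂_congr fun x hx => ?_)
  rw [Real.norm_eq_abs, Real.norm_of_nonneg (Real.rpow_nonneg hx.1.le b)]

lemma rpow_isBigO_rpow_Ioc {b c R : ℝ} (hcb : c ≤ b) :
    (fun x : ℝ => x ^ b) =O[𝓟 (Ioc 0 R)] (· ^ c) := by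
  refine isBigO_rpow_Ioc_iff.2 ⟨R ^ (b - c), fun x hx => ?_⟩
  have hc : 0 ≤ x ^ c := Real.rpow_nonneg hx.1.le c
  have hmono : x ^ (b - c) ≤ R ^ (b - c) := Real.rpow_le_rpow hx.1.le hx.2 (sub_nonneg.2 hcb)
  calc |x ^ b| = x ^ (b - c) * x ^ c := by
        rw [abs_of_nonneg (Real.rpow_nonneg hx.1.le b), ← Real.rpow_add hx.1, sub_add_cancel]
    _ ≤ R ^ (b - c) * x ^ c := by gcongr

lemma isBigO_id_mul_Ioc {R : ℝ} {f g : ℝ → ℝ} (hf : f =O[𝓟 (Ioc 0 R)] g) :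
    (fun s => s * f s) =O[𝓟 (Ioc 0 R)] g := by
  have hid : (fun s : ℝ => s) =O[𝓟 (Ioc 0 R)] fun _ => (1 : ℝ) :=
    (continuousOn_id.isBigO_principal isCompact_Icc (by simp)).mono
      (principal_mono.2 Ioc_subset_Icc_self)
  simpa using hid.mul hf

lemma isBigO_id_mul_rpow {b R : ℝ} {f : ℝ → ℝ} (hf : f =O[𝓟 (Ioc 0 R)] (· ^ (b - 1))) :
    (fun s => s * f s) =O[𝓟 (Ioc 0 R)] (· ^ b) := by
  refine ((isBigO_refl (fun s : ℝ => s) _).mul hf).congr' .rfl ?_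
  filter_upwards [mem_principal_self _] with s hs
  rw [mul_comm, ← Real.rpow_add_one hs.1.ne', sub_add_cancel]

lemma intervalIntegrable_one_sub_rpow_mul_rpow {a b : ℝ} (ha : 0 < a) (hb : -1 < b) :
    IntervalIntegrable (fun t : ℝ => (1 - t) ^ (a - 1) * t ^ b) volume 0 1 := by
  have hbeta := (Complex.betaIntegral_convergent (u := ((b + 1 : ℝ) : ℂ)) (v := (a : ℂ))
    (by simp; linarith) (by simpa using ha)).norm
  refine hbeta.congr_ae ?_
  rw [uIoc_of_le zero_le_one]
  have hne : ∀ᵐ t : ℝ ∂(volume.restrict (Ioc 0 1)), t ≠ 1 :=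
    ae_restrict_of_ae (volume.ae_ne 1)
  filter_upwards [hne, ae_restrict_mem measurableSet_Ioc] with t ht1 ht
  have hpos : 0 < 1 - t := sub_pos.2 (ht.2.lt_of_ne ht1)
  have hcast : 1 - (t : ℂ) = ((1 - t : ℝ) : ℂ) := by push_cast; rfl
  rw [norm_mul, hcast, Complex.norm_cpow_eq_rpow_re_of_pos ht.1,
    Complex.norm_cpow_eq_rpow_re_of_pos hpos]
  simp [mul_comm]

/-- The Kober fractional integral `∫₀¹ (1-t)^{a-1} f(xt) dt`, without the factor `1/Γ(a)`. Up to
`x^a` it is the Riemann–Liouville integral rescaled to a fixed interval, so that `x` enters only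
through `f` and one can differentiate under the integral sign. -/
noncomputable def koberIntegral (a : ℝ) (f : ℝ → ℝ) (x : ℝ) : ℝ :=
  ∫ t in (0 : ℝ)..1, (1 - t) ^ (a - 1) * f (x * t)

section Kober

variable {a b c R x : ℝ} {f f' g : ℝ → ℝ}

lemma mul_mem_Ioc_zero {t : ℝ} (hx : x ∈ Ioc 0 R) (ht : t ∈ Ioc (0 : ℝ) 1) :
    x * t ∈ Ioc 0 R :=
  ⟨mul_pos hx.1 ht.1, (mul_le_of_le_one_right hx.1.le ht.2).trans hx.2⟩

lemma mul_mem_Ioo_zero {t : ℝ} (hx : x ∈ Ioo 0 R) (ht : t ∈ Ioc (0 : ℝ) 1) :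
    x * t ∈ Ioo 0 R :=
  ⟨mul_pos hx.1 ht.1, (mul_le_of_le_one_right hx.1.le ht.2).trans_lt hx.2⟩

lemma aestronglyMeasurable_kober_integrand (a : ℝ) (hf : ContinuousOn f (Ioc 0 R))
    (hx : x ∈ Ioc 0 R) :
    AEStronglyMeasurable (fun t => (1 - t) ^ (a - 1) * f (x * t))
      (volume.restrict (uIoc 0 1)) := by
  rw [uIoc_of_le zero_le_one]
  refine (Measurable.aestronglyMeasurable (by fun_prop)).mul ?_
  exact (hf.comp (by fun_prop) fun t ht => mul_mem_Ioc_zero hx ht).aestronglyMeasurable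
    measurableSet_Ioc

lemma exists_norm_kober_integrand_le (a : ℝ) (hf : f =O[𝓟 (Ioc 0 R)] (· ^ b)) :
    ∃ C, 0 ≤ C ∧ ∀ x ∈ Ioc 0 R, ∀ t ∈ uIoc (0 : ℝ) 1,
      ‖(1 - t) ^ (a - 1) * f (x * t)‖ ≤ C * x ^ b * ((1 - t) ^ (a - 1) * t ^ b) := by
  obtain ⟨C, hC0, hC⟩ := hf.exists_nonneg
  refine ⟨C, hC0, fun x hx t ht => ?_⟩
  rw [uIoc_of_le zero_le_one] at ht
  have hbound : ‖f (x * t)‖ ≤ C * (x ^ b * t ^ b) := by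
    have h := isBigOWith_principal.1 hC _ (mul_mem_Ioc_zero hx ht)
    rwa [Real.norm_of_nonneg (Real.rpow_nonneg (mul_mem_Ioc_zero hx ht).1.le b),
      Real.mul_rpow hx.1.le ht.1.le] at h
  have hnonneg : 0 ≤ (1 - t) ^ (a - 1) := Real.rpow_nonneg (sub_nonneg.2 ht.2) _
  calc ‖(1 - t) ^ (a - 1) * f (x * t)‖ = (1 - t) ^ (a - 1) * ‖f (x * t)‖ := by
        rw [norm_mul, Real.norm_of_nonneg hnonneg]
    _ ≤ (1 - t) ^ (a - 1) * (C * (x ^ b * t ^ b)) := by gcongr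
    _ = C * x ^ b * ((1 - t) ^ (a - 1) * t ^ b) := by ring

lemma intervalIntegrable_kober_integrand (ha : 0 < a) (hb : -1 < b)
    (hf : ContinuousOn f (Ioc 0 R)) (hfO : f =O[𝓟 (Ioc 0 R)] (· ^ b)) (hx : x ∈ Ioc 0 R) :
    IntervalIntegrable (fun t => (1 - t) ^ (a - 1) * f (x * t)) volume 0 1 := by
  obtain ⟨C, -, hC⟩ := exists_norm_kober_integrand_le a hfO
  refine ((intervalIntegrable_one_sub_rpow_mul_rpow ha hb).const_mul (C * x ^ b)).mono_fun'
    (aestronglyMeasurable_kober_integrand a hf hx) ?_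
  filter_upwards [ae_restrict_mem measurableSet_uIoc] with t ht using hC x hx t ht

lemma koberIntegral_isBigO (ha : 0 < a) (hb : -1 < b) (hfO : f =O[𝓟 (Ioc 0 R)] (· ^ b)) :
    koberIntegral a f =O[𝓟 (Ioc 0 R)] (· ^ b) := by
  obtain ⟨C, -, hC⟩ := exists_norm_kober_integrand_le a hfO
  refine isBigO_rpow_Ioc_iff.2
    ⟨C * ∫ t in (0 : ℝ)..1, (1 - t) ^ (a - 1) * t ^ b, fun x hx => ?_⟩
  have h := intervalIntegral.norm_integral_le_of_norm_le zero_le_one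
    (Eventually.of_forall fun t ht => hC x hx t (uIoc_of_le (zero_le_one' ℝ) ▸ ht))
    ((intervalIntegrable_one_sub_rpow_mul_rpow ha hb).const_mul (C * x ^ b))
  rw [intervalIntegral.integral_const_mul] at h
  exact h.trans_eq (by ring)

lemma continuousOn_koberIntegral (ha : 0 < a) (hb : -1 < b)
    (hf : ContinuousOn f (Ioc 0 R)) (hfO : f =O[𝓟 (Ioc 0 R)] (· ^ b)) :
    ContinuousOn (koberIntegral a f) (Ioc 0 R) := by
  obtain ⟨C, hC0, hC⟩ := exists_norm_kober_integrand_le a hfO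
  intro x hx
  have hrpow : ∀ᶠ y in 𝓝 x, y ^ b < x ^ b + 1 :=
    (Real.continuousAt_rpow_const x b (Or.inl hx.1.ne')).eventually_lt_const (lt_add_one _)
  refine intervalIntegral.continuousWithinAt_of_dominated_interval
    (bound := fun t => C * (x ^ b + 1) * ((1 - t) ^ (a - 1) * t ^ b)) ?_ ?_
    ((intervalIntegrable_one_sub_rpow_mul_rpow ha hb).const_mul _) ?_
  · filter_upwards [self_mem_nhdsWithin] with y hy
      using aestronglyMeasurable_kober_integrand a hf hy
  · filter_upwards [self_mem_nhdsWithin, nhdsWithin_le_nhds hrpow] with y hy hyx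
    refine Eventually.of_forall fun t ht => (hC y hy t ht).trans ?_
    rw [uIoc_of_le zero_le_one] at ht
    have h1t : 0 ≤ 1 - t := sub_nonneg.2 ht.2
    have ht0 : 0 ≤ t := ht.1.le
    gcongr
  · refine Eventually.of_forall fun t ht => ?_
    rw [uIoc_of_le zero_le_one] at ht
    exact continuousWithinAt_const.mul ((hf _ (mul_mem_Ioc_zero hx ht)).comp (t := Ioc 0 R)
      (f := fun y => y * t) (by fun_prop) fun y hy => mul_mem_Ioc_zero hy ht)

lemma hasDerivAt_koberIntegral (ha : 0 < a) (hb : -1 < b) (hc : -1 < c)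
    (hderiv : ∀ s ∈ Ioc 0 R, HasDerivWithinAt f (f' s) (Ioc 0 R) s)
    (hfO : f =O[𝓟 (Ioc 0 R)] (· ^ b)) (hf' : ContinuousOn f' (Ioc 0 R))
    (hfO' : (fun s => s * f' s) =O[𝓟 (Ioc 0 R)] (· ^ c)) (hx : x ∈ Ioo 0 R) :
    HasDerivAt (koberIntegral a f) (x⁻¹ * koberIntegral a (fun s => s * f' s) x) x := by
  obtain ⟨C, hC0, hC⟩ := exists_norm_kober_integrand_le a hfO'
  have hf : ContinuousOn f (Ioc 0 R) := fun s hs => (hderiv s hs).continuousWithinAt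
  have hxR : x ∈ Ioc 0 R := Ioo_subset_Ioc_self hx
  have hscale : ∀ᶠ y in 𝓝 x, y⁻¹ * y ^ c < x⁻¹ * x ^ c + 1 :=
    ((continuousAt_inv₀ hx.1.ne').mul (Real.continuousAt_rpow_const x c (Or.inl hx.1.ne')))
      |>.eventually_lt_const (lt_add_one _)
  rw [koberIntegral, ← intervalIntegral.integral_const_mul]
  refine (intervalIntegral.hasDerivAt_integral_of_dominated_loc_of_deriv_le
    (F := fun y t => (1 - t) ^ (a - 1) * f (y * t))
    (F' := fun y t => y⁻¹ * ((1 - t) ^ (a - 1) * (y * t * f' (y * t))))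
    (bound := fun t => C * (x⁻¹ * x ^ c + 1) * ((1 - t) ^ (a - 1) * t ^ c))
    (inter_mem (Ioo_mem_nhds hx.1 hx.2) hscale) ?_
    (intervalIntegrable_kober_integrand ha hb hf hfO hxR) ?_ ?_
    ((intervalIntegrable_one_sub_rpow_mul_rpow ha hc).const_mul _) ?_).2
  · filter_upwards [Ioo_mem_nhds hx.1 hx.2] with y hy
      using aestronglyMeasurable_kober_integrand a hf (Ioo_subset_Ioc_self hy)
  · exact (aestronglyMeasurable_kober_integrand a (continuousOn_id.mul hf') hxR).const_mul _
  · refine Eventually.of_forall fun t ht y ⟨hy, hyx⟩ => ?_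
    have hbound := hC y (Ioo_subset_Ioc_self hy) t ht
    rw [uIoc_of_le zero_le_one] at ht
    have hy0 : 0 < y⁻¹ := inv_pos.2 hy.1
    have h1t : 0 ≤ 1 - t := sub_nonneg.2 ht.2
    have ht0 : 0 ≤ t := ht.1.le
    calc ‖y⁻¹ * ((1 - t) ^ (a - 1) * (y * t * f' (y * t)))‖
        ≤ y⁻¹ * (C * y ^ c * ((1 - t) ^ (a - 1) * t ^ c)) := by
          rw [norm_mul, Real.norm_of_nonneg hy0.le]; gcongr
      _ = C * (y⁻¹ * y ^ c) * ((1 - t) ^ (a - 1) * t ^ c) := by ring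
      _ ≤ C * (x⁻¹ * x ^ c + 1) * ((1 - t) ^ (a - 1) * t ^ c) := by gcongr; exact hyx.le
  · refine Eventually.of_forall fun t ht y ⟨hy, _⟩ => ?_
    rw [uIoc_of_le zero_le_one] at ht
    have hyt := mul_mem_Ioo_zero hy ht
    have hcomp := ((hderiv _ (Ioo_subset_Ioc_self hyt)).hasDerivAt
      (Ioc_mem_nhds hyt.1 hyt.2)).comp y ((hasDerivAt_id y).mul_const t)
    refine (hcomp.const_mul ((1 - t) ^ (a - 1))).congr_deriv ?_
    have := hy.1.ne'
    field_simp

lemma hasDerivWithinAt_koberIntegral (ha : 0 < a) (hb : -1 < b) (hc : -1 < c)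
    (hderiv : ∀ s ∈ Ioc 0 R, HasDerivWithinAt f (f' s) (Ioc 0 R) s)
    (hfO : f =O[𝓟 (Ioc 0 R)] (· ^ b)) (hf' : ContinuousOn f' (Ioc 0 R))
    (hfO' : (fun s => s * f' s) =O[𝓟 (Ioc 0 R)] (· ^ c)) (hx : x ∈ Ioc 0 R) :
    HasDerivWithinAt (koberIntegral a f) (x⁻¹ * koberIntegral a (fun s => s * f' s) x)
      (Ioc 0 R) x := by
  have hf : ContinuousOn f (Ioc 0 R) := fun s hs => (hderiv s hs).continuousWithinAt
  refine hasDerivWithinAt_Ioc_of_hasDerivAt_Ioo (continuousOn_koberIntegral ha hb hf hfO) ?_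
    (fun y hy => hasDerivAt_koberIntegral ha hb hc hderiv hfO hf' hfO' hy) hx
  exact (continuousOn_inv₀.mono fun y hy => hy.1.ne').mul
    (continuousOn_koberIntegral ha hc (continuousOn_id.mul hf') hfO')

lemma koberIntegral_add_const_mul (ha : 0 < a) (hb : -1 < b) (hc : -1 < c) (r : ℝ)
    (hf : ContinuousOn f (Ioc 0 R)) (hfO : f =O[𝓟 (Ioc 0 R)] (· ^ b))
    (hg : ContinuousOn g (Ioc 0 R)) (hgO : g =O[𝓟 (Ioc 0 R)] (· ^ c)) (hx : x ∈ Ioc 0 R) :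
    koberIntegral a (fun s => f s + r * g s) x
      = koberIntegral a f x + r * koberIntegral a g x := by
  simp only [koberIntegral]
  rw [← intervalIntegral.integral_const_mul, ← intervalIntegral.integral_add
    (intervalIntegrable_kober_integrand ha hb hf hfO hx)
    ((intervalIntegrable_kober_integrand ha hc hg hgO hx).const_mul r)]
  exact intervalIntegral.integral_congr fun t _ => by ring

lemma mul_koberIntegral_add_one (ha : 0 < a) (hb : -1 < b)
    (hf : ContinuousOn f (Ioc 0 R)) (hfO : f =O[𝓟 (Ioc 0 R)] (· ^ b)) (hx : x ∈ Ioc 0 R) :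
    x * koberIntegral (a + 1) f x
      = x * koberIntegral a f x - koberIntegral a (fun s => s * f s) x := by
  have hmul := intervalIntegrable_kober_integrand (f := fun s => s * f s) ha hb
    (continuousOn_id.mul hf) (isBigO_id_mul_Ioc hfO) hx
  simp only [koberIntegral]
  rw [← intervalIntegral.integral_const_mul, ← intervalIntegral.integral_const_mul,
    ← intervalIntegral.integral_sub
      ((intervalIntegrable_kober_integrand ha hb hf hfO hx).const_mul x) hmul]
  refine intervalIntegral.integral_congr_ae ?_
  filter_upwards [volume.ae_ne 1] with t ht1 _
  have hsplit : (1 - t) ^ (a + 1 - 1) = (1 - t) ^ (a - 1) * (1 - t) := by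
    rw [← Real.rpow_add_one (sub_ne_zero.2 ht1.symm), sub_add_cancel, add_sub_cancel_right]
  rw [hsplit]
  ring

lemma mul_koberIntegral_add_one_deriv (ha : 0 < a) (hb : -1 < b)
    (hf : ContinuousOn f (Icc 0 R))
    (hderiv : ∀ s ∈ Ioc 0 R, HasDerivWithinAt f (f' s) (Ioc 0 R) s)
    (hf' : ContinuousOn f' (Ioc 0 R)) (hfO' : f' =O[𝓟 (Ioc 0 R)] (· ^ b)) (hx : x ∈ Ioc 0 R) :
    x * koberIntegral (a + 1) f' x = a * koberIntegral a f x - f 0 := by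
  have hparts := intervalIntegral.integral_mul_deriv_eq_deriv_mul_of_hasDerivAt (a := 0) (b := 1)
    (u := fun t : ℝ => (1 - t) ^ a) (u' := fun t => -a * (1 - t) ^ (a - 1))
    (v := fun t => f (x * t)) (v' := fun t => x * f' (x * t)) ?_ ?_ ?_ ?_ ?_ ?_
  · simp only [sub_self, sub_zero, mul_zero, Real.one_rpow, Real.zero_rpow ha.ne', zero_mul,
      one_mul, zero_sub, mul_left_comm _ x, mul_assoc (-a),
      intervalIntegral.integral_const_mul] at hparts
    rw [koberIntegral, koberIntegral, add_sub_cancel_right, hparts]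
    ring
  · exact ContinuousOn.rpow_const (by fun_prop) fun t _ => Or.inr ha.le
  · rw [uIcc_of_le zero_le_one]
    exact hf.comp (by fun_prop) fun t ht =>
      ⟨mul_nonneg hx.1.le ht.1, (mul_le_of_le_one_right hx.1.le ht.2).trans hx.2⟩
  · intro t ht
    simp only [zero_le_one, inf_of_le_left, sup_of_le_right] at ht
    exact (((hasDerivAt_id t).const_sub 1).rpow_const (Or.inl (sub_pos.2 ht.2).ne')).congr_deriv
      (by simp)
  · intro t ht
    simp only [zero_le_one, inf_of_le_left, sup_of_le_right] at ht
    have hxt : x * t ∈ Ioo 0 R :=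
      ⟨mul_pos hx.1 ht.1, (mul_lt_of_lt_one_right hx.1 ht.2).trans_le hx.2⟩
    exact (((hderiv _ (Ioo_subset_Ioc_self hxt)).hasDerivAt
      (Ioc_mem_nhds hxt.1 hxt.2)).comp t ((hasDerivAt_id t).const_mul x)).congr_deriv (by ring)
  · simpa using (intervalIntegrable_one_sub_rpow_mul_rpow ha neg_one_lt_zero).const_mul (-a)
  · simpa using (intervalIntegrable_kober_integrand one_pos hb hf' hfO' hx).const_mul x

end Kober

/-- The Riemann–Liouville fractional integral of order `a` based at `0`. -/
noncomputable def riemannLiouville (a : ℝ) (f : ℝ → ℝ) (x : ℝ) : ℝ :=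
  1 / Real.Gamma a * ∫ s in (0 : ℝ)..x, (x - s) ^ (a - 1) * f s

section RiemannLiouville

variable {a b c R x : ℝ} {f f' : ℝ → ℝ}

lemma riemannLiouville_eq_rpow_mul_koberIntegral (a : ℝ) (f : ℝ → ℝ) (hx : 0 < x) :
    riemannLiouville a f x = 1 / Real.Gamma a * (x ^ a * koberIntegral a f x) := by
  have hscale := intervalIntegral.smul_integral_comp_mul_left (E := ℝ) (a := 0) (b := 1) (c := x)
    (f := fun s => (x - s) ^ (a - 1) * f s)
  rw [mul_zero, mul_one, smul_eq_mul] at hscale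
  rw [riemannLiouville, koberIntegral, ← hscale]
  congr 1
  rw [← intervalIntegral.integral_const_mul, ← intervalIntegral.integral_const_mul]
  refine intervalIntegral.integral_congr fun t ht => ?_
  rw [uIcc_of_le zero_le_one] at ht
  have hrpow : x ^ a = x * x ^ (a - 1) := by
    rw [mul_comm, ← Real.rpow_add_one hx.ne', sub_add_cancel]
  rw [← mul_one_sub, Real.mul_rpow hx.le (sub_nonneg.2 ht.2), hrpow]
  ring

lemma riemannLiouville_isBigO (ha : 0 < a) (hb : -1 < b) (hfO : f =O[𝓟 (Ioc 0 R)] (· ^ b)) :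
    riemannLiouville a f =O[𝓟 (Ioc 0 R)] (· ^ (a + b)) := by
  refine (((isBigO_refl (fun x : ℝ => x ^ a) _).mul
    (koberIntegral_isBigO ha hb hfO)).const_mul_left (1 / Real.Gamma a)).congr' ?_ ?_
  · filter_upwards [mem_principal_self _] with x hx
    exact (riemannLiouville_eq_rpow_mul_koberIntegral a f hx.1).symm
  · filter_upwards [mem_principal_self _] with x hx using (Real.rpow_add hx.1 a b).symm

lemma continuousOn_riemannLiouville (ha : 0 < a) (hb : -1 < b)
    (hf : ContinuousOn f (Ioc 0 R)) (hfO : f =O[𝓟 (Ioc 0 R)] (· ^ b)) :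
    ContinuousOn (riemannLiouville a f) (Ioc 0 R) := by
  have hrpow : ContinuousOn (fun x : ℝ => x ^ a) (Ioc 0 R) :=
    continuousOn_id.rpow_const fun x hx => Or.inl hx.1.ne'
  exact (continuousOn_const.mul (hrpow.mul (continuousOn_koberIntegral ha hb hf hfO))).congr
    fun x hx => riemannLiouville_eq_rpow_mul_koberIntegral a f hx.1

-- The rescaled integral turns the Euler operator `x d/dx` on the left into `s d/ds` on the right.
lemma hasDerivWithinAt_riemannLiouville_euler (ha : 0 < a) (hb : -1 < b) (hc : -1 < c)
    (hderiv : ∀ s ∈ Ioc 0 R, HasDerivWithinAt f (f' s) (Ioc 0 R) s)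
    (hfO : f =O[𝓟 (Ioc 0 R)] (· ^ b)) (hf' : ContinuousOn f' (Ioc 0 R))
    (hfO' : (fun s => s * f' s) =O[𝓟 (Ioc 0 R)] (· ^ c)) (hx : x ∈ Ioc 0 R) :
    HasDerivWithinAt (riemannLiouville a f)
      (x⁻¹ * riemannLiouville a (fun s => s * f' s + a * f s) x) (Ioc 0 R) x := by
  have hrpow : HasDerivWithinAt (fun y : ℝ => y ^ a) (a * x ^ (a - 1)) (Ioc 0 R) x :=
    (Real.hasDerivAt_rpow_const (Or.inl hx.1.ne')).hasDerivWithinAt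
  have hkober := hasDerivWithinAt_koberIntegral ha hb hc hderiv hfO hf' hfO' hx
  have hf : ContinuousOn f (Ioc 0 R) := fun s hs => (hderiv s hs).continuousWithinAt
  have hmul : ContinuousOn (fun s => s * f' s) (Ioc 0 R) := continuousOn_id.mul hf'
  refine (((hrpow.mul hkober).const_mul (1 / Real.Gamma a)).congr
    (fun y hy => riemannLiouville_eq_rpow_mul_koberIntegral a f hy.1)
    (riemannLiouville_eq_rpow_mul_koberIntegral a f hx.1)).congr_deriv ?_
  rw [riemannLiouville_eq_rpow_mul_koberIntegral _ _ hx.1,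
    koberIntegral_add_const_mul ha hc hb a hmul hfO' hf hfO hx,
    Real.rpow_sub_one hx.1.ne']
  ring

lemma hasDerivWithinAt_riemannLiouville (ha : 0 < a) (hb : -1 < b)
    (hf : ContinuousOn f (Icc 0 R))
    (hderiv : ∀ s ∈ Ioc 0 R, HasDerivWithinAt f (f' s) (Ioc 0 R) s)
    (hf' : ContinuousOn f' (Ioc 0 R)) (hfO' : f' =O[𝓟 (Ioc 0 R)] (· ^ b)) (hx : x ∈ Ioc 0 R) :
    HasDerivWithinAt (riemannLiouville a f)
      (f 0 / Real.Gamma a * x ^ (a - 1) + riemannLiouville a f' x) (Ioc 0 R) x := by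
  have hfO : f =O[𝓟 (Ioc 0 R)] (· ^ (0 : ℝ)) := by
    simpa only [Real.rpow_zero] using (hf.isBigO_principal isCompact_Icc (c := (1 : ℝ))
      (by simp)).mono (principal_mono.2 Ioc_subset_Icc_self)
  have hfc := hf.mono Ioc_subset_Icc_self
  have hmul : ContinuousOn (fun s => s * f' s) (Ioc 0 R) := continuousOn_id.mul hf'
  have hO' := isBigO_id_mul_Ioc hfO'
  refine (hasDerivWithinAt_riemannLiouville_euler ha neg_one_lt_zero hb hderiv hfO hf' hO'
    hx).congr_deriv ?_
  have hshift := mul_koberIntegral_add_one ha hb hf' hfO' hx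
  have hparts := mul_koberIntegral_add_one_deriv ha hb hf hderiv hf' hfO' hx
  have hkober : koberIntegral a (fun s => s * f' s) x + a * koberIntegral a f x
      = f 0 + x * koberIntegral a f' x := by
    linarith
  rw [riemannLiouville_eq_rpow_mul_koberIntegral _ _ hx.1,
    riemannLiouville_eq_rpow_mul_koberIntegral _ _ hx.1,
    koberIntegral_add_const_mul ha hb neg_one_lt_zero a hmul hO' hfc hfO hx,
    hkober, Real.rpow_sub_one hx.1.ne']
  have := hx.1.ne'
  field_simp

lemma hasDerivWithinAt_riemannLiouville_add_one (ha : 0 < a) (hb : -1 < b)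
    (hf : ContinuousOn f (Icc 0 R))
    (hderiv : ∀ s ∈ Ioc 0 R, HasDerivWithinAt f (f' s) (Ioc 0 R) s)
    (hf' : ContinuousOn f' (Ioc 0 R)) (hfO' : f' =O[𝓟 (Ioc 0 R)] (· ^ b)) (hx : x ∈ Ioc 0 R) :
    HasDerivWithinAt (riemannLiouville (a + 1) f) (riemannLiouville a f x) (Ioc 0 R) x := by
  refine (hasDerivWithinAt_riemannLiouville (by linarith) hb hf hderiv hf' hfO' hx).congr_deriv ?_
  have hparts := mul_koberIntegral_add_one_deriv ha hb hf hderiv hf' hfO' hx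
  have hΓ := (Real.Gamma_pos_of_pos ha).ne'
  rw [riemannLiouville_eq_rpow_mul_koberIntegral _ _ hx.1,
    riemannLiouville_eq_rpow_mul_koberIntegral _ _ hx.1, Real.Gamma_add_one ha.ne',
    add_sub_cancel_right, Real.rpow_add_one hx.1.ne']
  field_simp
  linear_combination x ^ a * hparts

end RiemannLiouville

section Iterated

variable {a b R x : ℝ} {f f' f'' : ℝ → ℝ} {n : ℕ}

lemma contDiffOn_riemannLiouville_add_natCast (ha : 0 < a) (hb : -1 < b)
    (hf : ContinuousOn f (Icc 0 R))
    (hderiv : ∀ s ∈ Ioc 0 R, HasDerivWithinAt f (f' s) (Ioc 0 R) s)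
    (hf' : ContinuousOn f' (Ioc 0 R)) (hfO' : f' =O[𝓟 (Ioc 0 R)] (· ^ b))
    (h : ContDiffOn ℝ n (riemannLiouville a f) (Ioc 0 R)) (k : ℕ) :
    ContDiffOn ℝ (k + n : ℕ) (riemannLiouville (a + k) f) (Ioc 0 R) := by
  induction k with
  | zero => simpa using h
  | succ k ih =>
    rw [Nat.cast_succ, ← add_assoc, Nat.succ_add]
    exact contDiffOn_succ_of_hasDerivWithinAt (uniqueDiffOn_Ioc 0 R)
      (fun x hx => hasDerivWithinAt_riemannLiouville_add_one (by positivity) hb hf hderiv hf'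
        hfO' hx) ih

lemma iteratedDerivWithin_riemannLiouville_add_natCast (ha : 0 < a) (hb : -1 < b)
    (hf : ContinuousOn f (Icc 0 R))
    (hderiv : ∀ s ∈ Ioc 0 R, HasDerivWithinAt f (f' s) (Ioc 0 R) s)
    (hf' : ContinuousOn f' (Ioc 0 R)) (hfO' : f' =O[𝓟 (Ioc 0 R)] (· ^ b))
    (k n : ℕ) (hx : x ∈ Ioc 0 R) :
    iteratedDerivWithin (k + n) (riemannLiouville (a + k) f) (Ioc 0 R) x
      = iteratedDerivWithin n (riemannLiouville a f) (Ioc 0 R) x := by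
  induction k with
  | zero => simp
  | succ k ih =>
    rw [Nat.cast_succ, ← add_assoc, Nat.succ_add, ← ih]
    exact iteratedDerivWithin_succ_of_hasDerivWithinAt (uniqueDiffOn_Ioc 0 R)
      (fun x hx => hasDerivWithinAt_riemannLiouville_add_one (by positivity) hb hf hderiv hf'
        hfO' hx) hx

lemma contDiffOn_one_riemannLiouville (ha : 0 < a) (hb : -1 < b)
    (hderiv : ∀ s ∈ Ioc 0 R, HasDerivWithinAt f (f' s) (Ioc 0 R) s)
    (hfO : f =O[𝓟 (Ioc 0 R)] (· ^ b)) (hf' : ContinuousOn f' (Ioc 0 R))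
    (hfO' : f' =O[𝓟 (Ioc 0 R)] (· ^ (b - 1))) :
    ContDiffOn ℝ (1 : ℕ) (riemannLiouville a f) (Ioc 0 R) := by
  have hf : ContinuousOn f (Ioc 0 R) := fun s hs => (hderiv s hs).continuousWithinAt
  have hmul : ContinuousOn (fun s => s * f' s) (Ioc 0 R) := continuousOn_id.mul hf'
  have hmulO := isBigO_id_mul_rpow hfO'
  have hcont : ContinuousOn (fun x => x⁻¹ * riemannLiouville a (fun s => s * f' s + a * f s) x)
      (Ioc 0 R) :=
    (continuousOn_inv₀.mono fun x hx => hx.1.ne').mul (continuousOn_riemannLiouville ha hb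
      (hmul.add (continuousOn_const.mul hf)) (hmulO.add (hfO.const_mul_left a)))
  exact contDiffOn_succ_of_hasDerivWithinAt (n := 0) (uniqueDiffOn_Ioc 0 R)
    (fun x hx => hasDerivWithinAt_riemannLiouville_euler ha hb hb hderiv hfO hf' hmulO hx)
    (by simpa using hcont)

lemma contDiffOn_two_riemannLiouville (ha : 0 < a) (hb : -1 < b)
    (hf : ContinuousOn f (Icc 0 R))
    (hderiv : ∀ s ∈ Ioc 0 R, HasDerivWithinAt f (f' s) (Ioc 0 R) s)
    (hderiv' : ∀ s ∈ Ioc 0 R, HasDerivWithinAt f' (f'' s) (Ioc 0 R) s)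
    (hfO' : f' =O[𝓟 (Ioc 0 R)] (· ^ b)) (hf'' : ContinuousOn f'' (Ioc 0 R))
    (hfO'' : f'' =O[𝓟 (Ioc 0 R)] (· ^ (b - 1))) :
    ContDiffOn ℝ (2 : ℕ) (riemannLiouville a f) (Ioc 0 R) := by
  have hf' : ContinuousOn f' (Ioc 0 R) := fun s hs => (hderiv' s hs).continuousWithinAt
  have hrpow : ContDiffOn ℝ (1 : ℕ) (fun x : ℝ => f 0 / Real.Gamma a * x ^ (a - 1)) (Ioc 0 R) :=
    contDiffOn_const.mul (contDiffOn_id.rpow_const_of_ne fun x hx => hx.1.ne')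
  exact contDiffOn_succ_of_hasDerivWithinAt (uniqueDiffOn_Ioc 0 R)
    (fun x hx => hasDerivWithinAt_riemannLiouville ha hb hf hderiv hf' hfO' hx)
    (hrpow.add (contDiffOn_one_riemannLiouville ha hb hderiv' hfO' hf'' hfO''))

lemma iteratedDerivWithin_two_riemannLiouville (ha : 0 < a) (ha1 : a ≠ 1) (hb : -1 < b)
    (hf : ContinuousOn f (Icc 0 R))
    (hderiv : ∀ s ∈ Ioc 0 R, HasDerivWithinAt f (f' s) (Ioc 0 R) s)
    (hderiv' : ∀ s ∈ Ioc 0 R, HasDerivWithinAt f' (f'' s) (Ioc 0 R) s)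
    (hfO' : f' =O[𝓟 (Ioc 0 R)] (· ^ b)) (hf'' : ContinuousOn f'' (Ioc 0 R))
    (hfO'' : f'' =O[𝓟 (Ioc 0 R)] (· ^ (b - 1))) (hx : x ∈ Ioc 0 R) :
    iteratedDerivWithin 2 (riemannLiouville a f) (Ioc 0 R) x
      = f 0 / Real.Gamma (a - 1) * x ^ (a - 2)
        + x⁻¹ * riemannLiouville a (fun s => s * f'' s + a * f' s) x := by
  have hf' : ContinuousOn f' (Ioc 0 R) := fun s hs => (hderiv' s hs).continuousWithinAt
  have hrpow : HasDerivWithinAt (fun y : ℝ => y ^ (a - 1)) ((a - 1) * x ^ (a - 1 - 1))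
      (Ioc 0 R) x :=
    (Real.hasDerivAt_rpow_const (Or.inl hx.1.ne')).hasDerivWithinAt
  have hΓ : Real.Gamma a = (a - 1) * Real.Gamma (a - 1) := by
    simpa using Real.Gamma_add_one (sub_ne_zero.2 ha1)
  have hexp : a - 1 - 1 = a - 2 := by ring
  rw [iteratedDerivWithin_succ_of_hasDerivWithinAt (uniqueDiffOn_Ioc 0 R)
    (fun y hy => hasDerivWithinAt_riemannLiouville ha hb hf hderiv hf' hfO' hy) hx,
    iteratedDerivWithin_one, ((hrpow.const_mul (f 0 / Real.Gamma a)).fun_add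
      (hasDerivWithinAt_riemannLiouville_euler ha hb hb hderiv' hfO' hf''
        (isBigO_id_mul_rpow hfO'') hx)).derivWithin (uniqueDiffOn_Ioc 0 R x hx),
    hΓ, hexp, ← mul_assoc, div_mul_eq_mul_div, mul_comm (a - 1),
    mul_div_mul_right _ _ (sub_ne_zero.2 ha1)]

lemma iteratedDerivWithin_two_riemannLiouville_isBigO (ha : 0 < a) (ha1 : a ≠ 1) (hb : -1 < b)
    (hf : ContinuousOn f (Icc 0 R))
    (hderiv : ∀ s ∈ Ioc 0 R, HasDerivWithinAt f (f' s) (Ioc 0 R) s)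
    (hderiv' : ∀ s ∈ Ioc 0 R, HasDerivWithinAt f' (f'' s) (Ioc 0 R) s)
    (hfO' : f' =O[𝓟 (Ioc 0 R)] (· ^ b)) (hf'' : ContinuousOn f'' (Ioc 0 R))
    (hfO'' : f'' =O[𝓟 (Ioc 0 R)] (· ^ (b - 1))) :
    iteratedDerivWithin 2 (riemannLiouville a f) (Ioc 0 R) =O[𝓟 (Ioc 0 R)] (· ^ (a - 2)) := by
  have hintegral : (fun x => x⁻¹ * riemannLiouville a (fun s => s * f'' s + a * f' s) x)
      =O[𝓟 (Ioc 0 R)] (· ^ (a + b - 1)) := by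
    refine ((isBigO_refl (fun x : ℝ => x⁻¹) _).mul (riemannLiouville_isBigO ha hb
      ((isBigO_id_mul_rpow hfO'').add (hfO'.const_mul_left a)))).congr' .rfl ?_
    filter_upwards [mem_principal_self _] with x hx
    rw [Real.rpow_sub_one hx.1.ne', div_eq_inv_mul]
  refine (((isBigO_refl (fun x : ℝ => x ^ (a - 2)) _).const_mul_left (f 0 / Real.Gamma (a - 1))).add
    (hintegral.trans (rpow_isBigO_rpow_Ioc (by linarith)))).congr' ?_ .rfl
  filter_upwards [mem_principal_self _] with x hx
  exact (iteratedDerivWithin_two_riemannLiouville ha ha1 hb hf hderiv hderiv' hfO' hf'' hfO''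
    hx).symm

end Iterated

lemma iteratedDerivWithin_rfun {σ x : ℝ} {φ : ℝ → ℝ} {s : Set ℝ} {n : ℕ} {p : Polynomial ℝ}
    (hp : p.degree < n) (hs : UniqueDiffOn ℝ s) (h : ContDiffOn ℝ n (riemannLiouville σ φ) s)
    (hx : x ∈ s) :
    iteratedDerivWithin n (rfun σ p φ) s x
      = iteratedDerivWithin n (riemannLiouville σ φ) s x := by
  have heval : ContDiffWithinAt ℝ n (fun y => p.eval y) s x :=
    (p.contDiff_aeval (𝕜 := ℝ) n).contDiffWithinAt
  have hadd := iteratedDerivWithin_fun_add hx hs heval (h x hx)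
  rwa [iteratedDerivWithin_polynomial_eval p hs n hx,
    Polynomial.iterate_derivative_eq_zero_of_degree_lt hp, Polynomial.eval_zero, zero_add] at hadd

theorem stmt9_general (m : ℕ) (hm : 0 < m) (σ : ℝ) (hσ : (m : ℝ) - 1 < σ) (hσm : σ ≠ m)
    (p : Polynomial ℝ) (hp : p.degree ≤ m) (R : ℝ)
    (φ : ℝ → ℝ) (hφ : ContinuousOn φ (Icc 0 R)) (hφ2 : ContDiffOn ℝ 2 φ (Ioc 0 R))
    (β : ℝ) (hβ : -1 < β)
    (hφ' : derivWithin φ (Icc 0 R) =O[𝓟 (Ioc 0 R)] (· ^ β))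
    (hφ'' : derivWithin (derivWithin φ (Icc 0 R)) (Icc 0 R) =O[𝓟 (Ioc 0 R)] (· ^ (β - 1))) :
    ContDiffOn ℝ (m + 1) (rfun σ p φ) (Ioc 0 R) ∧
    (∀ x ∈ Ioc 0 R,
      iteratedDerivWithin (m + 1) (rfun σ p φ) (Icc 0 R) x
        = (φ 0 / Real.Gamma (σ - m)) * x ^ (σ - m - 1)
          + (1 / Real.Gamma (σ - m + 1)) * (1 / x) *
              ∫ s in (0 : ℝ)..x, (x - s) ^ (σ - m) *
                (s * derivWithin (derivWithin φ (Icc 0 R)) (Icc 0 R) s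
                  + (σ - m + 1) * derivWithin φ (Icc 0 R) s)) ∧
    iteratedDerivWithin (m + 1) (rfun σ p φ) (Icc 0 R) =O[𝓟 (Ioc 0 R)] (· ^ (σ - m - 1)) := by
  obtain ⟨k, rfl⟩ : ∃ k, m = k + 1 := ⟨m - 1, by omega⟩
  obtain ⟨a, rfl⟩ : ∃ a, σ = a + k := ⟨σ - k, by ring⟩
  have hk : ((k + 1 : ℕ) : ℝ) = k + 1 := Nat.cast_succ k
  have ha : 0 < a := by linarith
  have ha1 : a ≠ 1 := by rintro rfl; exact hσm (by rw [hk, add_comm])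
  have hexp0 : a + k - (k + 1 : ℕ) = a - 1 := by rw [hk]; ring
  have hexp1 : a - 1 - 1 = a - 2 := by ring
  have hφ1 := contDiffOn_derivWithin_Icc (n := 1) hφ2
  have hderiv := fun s => hasDerivWithinAt_derivWithin_Icc (x := s) (hφ2.differentiableOn (by simp))
  have hderiv' := fun s =>
    hasDerivWithinAt_derivWithin_Icc (x := s) (hφ1.differentiableOn (by simp))
  have hcont' := (contDiffOn_derivWithin_Icc (n := 0) hφ1).continuousOn
  have hJ := contDiffOn_riemannLiouville_add_natCast ha hβ hφ hderiv hφ1.continuousOn hφ'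
    (contDiffOn_two_riemannLiouville ha hβ hφ hderiv hderiv' hφ' hcont' hφ'') k
  have hiter : ∀ x ∈ Ioc 0 R, iteratedDerivWithin (k + 1 + 1) (rfun (a + k) p φ) (Icc 0 R) x
      = iteratedDerivWithin 2 (riemannLiouville a φ) (Ioc 0 R) x := fun x hx => by
    rw [iteratedDerivWithin_Icc_eq_Ioc _ _ hx.1,
      iteratedDerivWithin_rfun (hp.trans_lt (by norm_cast; simp)) (uniqueDiffOn_Ioc 0 R) hJ hx]
    exact iteratedDerivWithin_riemannLiouville_add_natCast ha hβ hφ hderiv hφ1.continuousOn hφ' k 2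
      hx
  rw [hexp0, sub_add_cancel, hexp1]
  refine ⟨?_, fun x hx => ?_, ?_⟩
  · exact (p.contDiff_aeval (𝕜 := ℝ) _).contDiffOn.add hJ
  · rw [hiter x hx, iteratedDerivWithin_two_riemannLiouville ha ha1 hβ hφ hderiv hderiv' hφ'
      hcont' hφ'' hx, riemannLiouville]
    ring
  · exact (iteratedDerivWithin_two_riemannLiouville_isBigO ha ha1 hβ hφ hderiv hderiv' hφ' hcont'
      hφ'').congr' (eventually_principal.2 fun x hx => (hiter x hx).symm) .rfl

theorem stmt9 (m : ℕ) (hm : 0 < m) (σ : ℝ) (hσ1 : (m:ℝ) - 1 < σ) (hσ2 : σ < m)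
    (p : Polynomial ℝ) (hp : p.degree ≤ (m - 1 : ℕ))
    (φ : ℝ → ℝ) (hφc : ContinuousOn φ (Set.Icc 0 1))
    (hφ2 : ContDiffOn ℝ 2 φ (Set.Ioc 0 1))
    (C₀ : ℝ)
    (hφb1 : ∀ s ∈ Set.Ioc (0:ℝ) 1,
      |derivWithin φ (Set.Icc 0 1) s| ≤ C₀ * s ^ (σ - m))
    (hφb2 : ∀ s ∈ Set.Ioc (0:ℝ) 1,
      |derivWithin (derivWithin φ (Set.Icc 0 1)) (Set.Icc 0 1) s| ≤ C₀ * s ^ (σ - m - 1)) :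
    ContDiffOn ℝ (m + 1) (rfun σ p φ) (Set.Ioc 0 1) ∧
    (∀ x ∈ Set.Ioc (0:ℝ) 1,
      iteratedDerivWithin (m + 1) (rfun σ p φ) (Set.Icc 0 1) x
        = (φ 0 / Real.Gamma (σ - m)) * x ^ (σ - m - 1)
          + (1 / Real.Gamma (σ - m + 1)) * (1 / x) *
              ∫ s in (0:ℝ)..x, (x - s) ^ (σ - m) *
                (s * derivWithin (derivWithin φ (Set.Icc 0 1)) (Set.Icc 0 1) s
                  + (σ - m + 1) * derivWithin φ (Set.Icc 0 1) s)) ∧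
    ∃ C : ℝ, ∀ x ∈ Set.Ioc (0:ℝ) 1,
      |iteratedDerivWithin (m + 1) (rfun σ p φ) (Set.Icc 0 1) x| ≤ C * x ^ (σ - m - 1) := by
  have hdeg : p.degree ≤ m := hp.trans (by exact_mod_cast Nat.sub_le m 1)
  simpa only [isBigO_rpow_Ioc_iff] using stmt9_general m hm σ hσ1 hσ2.ne p hdeg 1 φ hφc hφ2
    (σ - m) (by linarith) (isBigO_rpow_Ioc_iff.2 ⟨C₀, hφb1⟩) (isBigO_rpow_Ioc_iff.2 ⟨C₀, hφb2⟩)
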